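/- For every pomset 𝕡 on s coordinates and every labeling π with n = Σ_{i∈[s]} π(i), the pomset block distance d_{(𝕡,π)} is a metric on ℤ_m^n: for all u, v, w ∈ ℤ_m^n one has d_{(𝕡,π)}(u,v) ≥ 0 with equality if and only if u = v, d_{(𝕡,π)}(u,v) = d_{(𝕡,π)}(v,u), and d_{(𝕡,π)}(u,v) ≤ d_{(𝕡,π)}(u,w) + d_{(𝕡,π)}(w,v). -/

import Mathlib

open scoped Classical

noncomputable section

/-- Lee weight of an element of `ZMod m`. -/
def leeWt (m : ℕ) (a : ZMod m) : ℕ := min a.val (m - a.val)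

/-- Block Lee weight of the `i`-th block of `u`. -/
def blockWt (m s : ℕ) (π : Fin s → ℕ) (u : ∀ i : Fin s, Fin (π i) → ZMod m)
    (i : Fin s) : ℕ :=
  Finset.univ.sup fun t => leeWt m (u i t)

/-- The `(𝕡,π)`-weight of `u`. -/
def pomsetWt (m s : ℕ) (P : PartialOrder (Fin s)) (π : Fin s → ℕ)
    (u : ∀ i : Fin s, Fin (π i) → ZMod m) : ℕ :=
  ∑ i : Fin s,
    if ∃ j, j ≠ i ∧ P.le i j ∧ 0 < blockWt m s π u j then m / 2
    else blockWt m s π u i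

/-- The pomset block distance. -/
def pomsetDist (m s : ℕ) (P : PartialOrder (Fin s)) (π : Fin s → ℕ)
    (u v : ∀ i : Fin s, Fin (π i) → ZMod m) : ℕ :=
  pomsetWt m s P π (u - v)

/-- An ideal of the pomset `𝕡`, given by its count function `I : [s] → {0,…,⌊m/2⌋}`. -/
def IsIdeal (m s : ℕ) (P : PartialOrder (Fin s)) (I : Fin s → ℕ) : Prop :=
  (∀ a, I a ≤ m / 2) ∧ ∀ a b, 0 < I a → P.le b a → b ≠ a → I b = m / 2

/-- An ideal has full count if every element of its root set has count `⌊m/2⌋`. -/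
def FullCount (m : ℕ) {s : ℕ} (I : Fin s → ℕ) : Prop :=
  ∀ a, 0 < I a → I a = m / 2

/-- The cardinality `|I|` of an ideal. -/
def idealCard {s : ℕ} (I : Fin s → ℕ) : ℕ := ∑ a, I a

/-- The cardinality `|I*|` of the root set of an ideal. -/
def rootCard {s : ℕ} (I : Fin s → ℕ) : ℕ :=
  (Finset.univ.filter fun a => 0 < I a).card

/-- `Σ_{i ∈ I*} k_i`. -/
def rootSum {s : ℕ} (π I : Fin s → ℕ) : ℕ :=
  ∑ a ∈ Finset.univ.filter (fun a => 0 < I a), π a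

/-- The `I`-ball centered at `u`. -/
def ballI (m s : ℕ) (π : Fin s → ℕ) (I : Fin s → ℕ)
    (u : ∀ i : Fin s, Fin (π i) → ZMod m) :
    Set (∀ i : Fin s, Fin (π i) → ZMod m) :=
  {v | ∀ i, blockWt m s π (u - v) i ≤ I i}

/-- `𝒞` is `I`-perfect: the `I`-balls centered at codewords are pairwise
disjoint and cover the whole space. -/
def IPerfect (m s : ℕ) (π : Fin s → ℕ) (I : Fin s → ℕ)
    (C : Set (∀ i : Fin s, Fin (π i) → ZMod m)) : Prop :=
  (C.Pairwise fun c c' => Disjoint (ballI m s π I c) (ballI m s π I c')) ∧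
  (⋃ c ∈ C, ballI m s π I c) = Set.univ

/-- The `r`-ball centered at `u`. -/
def ballR (m s : ℕ) (P : PartialOrder (Fin s)) (π : Fin s → ℕ) (r : ℕ)
    (u : ∀ i : Fin s, Fin (π i) → ZMod m) :
    Set (∀ i : Fin s, Fin (π i) → ZMod m) :=
  {v | pomsetDist m s P π u v ≤ r}

/-- The standard dot product on `ℤ_m^n`. -/
def dotProd (m s : ℕ) (π : Fin s → ℕ)
    (c v : ∀ i : Fin s, Fin (π i) → ZMod m) : ZMod m :=
  ∑ i, ∑ t, c i t * v i t

/-- The dual code `𝒞^⊥`. -/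
def dualCode (m s : ℕ) (π : Fin s → ℕ)
    (C : Set (∀ i : Fin s, Fin (π i) → ZMod m)) :
    Set (∀ i : Fin s, Fin (π i) → ZMod m) :=
  {v | ∀ c ∈ C, dotProd m s π c v = 0}

/-- The dual pomset, encoded by the opposite partial order. -/
def dualOrder (s : ℕ) (P : PartialOrder (Fin s)) : PartialOrder (Fin s) where
  le a b := P.le b a
  lt a b := P.lt b a
  le_refl a := P.le_refl a
  le_trans a b c h1 h2 := P.le_trans _ _ _ h2 h1
  lt_iff_le_not_ge a b := P.lt_iff_le_not_ge b a
  le_antisymm a b h1 h2 := (P.le_antisymm _ _ h1 h2).symm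

/-- The minimum `(𝕡,π)`-distance of a code. -/
def minDist (m s : ℕ) (P : PartialOrder (Fin s)) (π : Fin s → ℕ)
    (C : Set (∀ i : Fin s, Fin (π i) → ZMod m)) : ℕ :=
  sInf {r | ∃ c ∈ C, ∃ c' ∈ C, c ≠ c' ∧ r = pomsetWt m s P π (c - c')}

/-- `𝒞` is an MDS `(𝕡,π)`-code: it attains the Singleton bound
`n − ⌈log_m K⌉ ≥ max { Σ_{i∈I*} k_i : I ideal, |I*| = ⌊(d−1)/⌊m/2⌋⌋ }`. -/
def IsMDS (m s : ℕ) (P : PartialOrder (Fin s)) (π : Fin s → ℕ)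
    (C : Set (∀ i : Fin s, Fin (π i) → ZMod m)) : Prop :=
  (∀ I, IsIdeal m s P I →
      rootCard I = (minDist m s P π C - 1) / (m / 2) →
      rootSum π I ≤ (∑ i, π i) - Nat.clog m (Nat.card ↥C)) ∧
  (∃ I, IsIdeal m s P I ∧
      rootCard I = (minDist m s P π C - 1) / (m / 2) ∧
      rootSum π I = (∑ i, π i) - Nat.clog m (Nat.card ↥C))

/-- The chain pomset on `[s]`: the usual total order on `Fin s`. -/
def chainOrder (s : ℕ) : PartialOrder (Fin s) := inferInstance

/-!
The `(𝕡,π)`-weight of `u` is the cardinality of the ideal generated by the block Lee weights of `u`.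
Those weights never exceed the maximal multiplicity `⌊m/2⌋`, so generating an ideal only raises
counts; hence weight zero forces `u = 0`. For subadditivity compare the counts of the ideals
generated by `u + v`, `u` and `v` coordinatewise: at a coordinate strictly below the support of `u`
or of `v`, one of the latter two already has the maximal count `⌊m/2⌋`; any other coordinate does
not lie strictly below the support of `u + v` either, and there the block Lee weight is subadditive.
-/

section LeeWeight

variable {m : ℕ}

lemma leeWt_le_half (a : ZMod m) : leeWt m a ≤ m / 2 := by
  unfold leeWt
  omega

variable [NeZero m]

lemma leeWt_eq_natAbs_valMinAbs (a : ZMod m) : leeWt m a = a.valMinAbs.natAbs :=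
  a.valMinAbs_natAbs_eq_min.symm

lemma leeWt_eq_zero (a : ZMod m) : leeWt m a = 0 ↔ a = 0 := by
  rw [leeWt_eq_natAbs_valMinAbs, Int.natAbs_eq_zero, ZMod.valMinAbs_eq_zero]

lemma leeWt_neg (a : ZMod m) : leeWt m (-a) = leeWt m a := by
  simp only [leeWt_eq_natAbs_valMinAbs, ZMod.natAbs_valMinAbs_neg]

lemma leeWt_add_le (a b : ZMod m) : leeWt m (a + b) ≤ leeWt m a + leeWt m b := by
  simp only [leeWt_eq_natAbs_valMinAbs]
  exact (ZMod.natAbs_valMinAbs_add_le a b).trans (Int.natAbs_add_le _ _)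

end LeeWeight

section BlockWeight

variable {m s : ℕ} {π : Fin s → ℕ}

lemma leeWt_le_blockWt (u : ∀ i : Fin s, Fin (π i) → ZMod m) (i : Fin s) (t : Fin (π i)) :
    leeWt m (u i t) ≤ blockWt m s π u i :=
  Finset.le_sup (f := fun t => leeWt m (u i t)) (Finset.mem_univ t)

lemma blockWt_le_half (u : ∀ i : Fin s, Fin (π i) → ZMod m) (i : Fin s) :
    blockWt m s π u i ≤ m / 2 :=
  Finset.sup_le fun _ _ => leeWt_le_half _

variable [NeZero m]

lemma blockWt_eq_zero (u : ∀ i : Fin s, Fin (π i) → ZMod m) :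
    blockWt m s π u = 0 ↔ u = 0 := by
  simp only [funext_iff, blockWt, Pi.zero_apply, ← Nat.bot_eq_zero, Finset.sup_eq_bot_iff,
    Finset.mem_univ, true_imp_iff]
  simp only [Nat.bot_eq_zero, leeWt_eq_zero]

lemma blockWt_neg (u : ∀ i : Fin s, Fin (π i) → ZMod m) :
    blockWt m s π (-u) = blockWt m s π u := by
  funext i
  simp only [blockWt, Pi.neg_apply, leeWt_neg]

lemma blockWt_add_le (u v : ∀ i : Fin s, Fin (π i) → ZMod m) (i : Fin s) :
    blockWt m s π (u + v) i ≤ blockWt m s π u i + blockWt m s π v i :=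
  Finset.sup_le fun t _ =>
    (leeWt_add_le _ _).trans (add_le_add (leeWt_le_blockWt u i t) (leeWt_le_blockWt v i t))

end BlockWeight

section GeneratedIdeal

variable {ι α : Type*}

/-- The count function of the ideal generated by a multiset with count function `w`, in a pomset
with order `r` whose elements all have multiplicity `c`: the count is `c` strictly below the support
of `w` and is given by `w` elsewhere. The relation `r` is arbitrary, and "strictly below" means
related by `r` and distinct. -/
def idealClosure [Zero α] [LT α] (r : ι → ι → Prop) (c : α) (w : ι → α) (i : ι) : α :=
  if ∃ j, j ≠ i ∧ r i j ∧ 0 < w j then c else w i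

variable {r : ι → ι → Prop} {c : α} {w w₁ w₂ : ι → α} {i : ι}

lemma idealClosure_le [Zero α] [Preorder α] (hw : w i ≤ c) : idealClosure r c w i ≤ c := by
  unfold idealClosure
  split_ifs
  exacts [le_rfl, hw]

lemma le_idealClosure [Zero α] [Preorder α] (hw : w i ≤ c) : w i ≤ idealClosure r c w i := by
  unfold idealClosure
  split_ifs
  exacts [hw, le_rfl]

variable [AddCommMonoid α] [PartialOrder α] [CanonicallyOrderedAdd α]

lemma idealClosure_eq_zero (hw : ∀ i, w i ≤ c) : idealClosure r c w = 0 ↔ w = 0 := by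
  constructor
  · intro h
    funext i
    exact nonpos_iff_eq_zero.1 ((le_idealClosure (hw i)).trans_eq (congrFun h i))
  · rintro rfl
    funext i
    simp [idealClosure]

lemma idealClosure_le_add (hw : w i ≤ c) (hadd : ∀ j, w j ≤ w₁ j + w₂ j) :
    idealClosure r c w i ≤ idealClosure r c w₁ i + idealClosure r c w₂ i := by
  by_cases h₁ : ∃ j, j ≠ i ∧ r i j ∧ 0 < w₁ j
  · have hc : idealClosure r c w₁ i = c := if_pos h₁
    exact ((idealClosure_le hw).trans_eq hc.symm).trans le_self_add
  by_cases h₂ : ∃ j, j ≠ i ∧ r i j ∧ 0 < w₂ j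
  · have hc : idealClosure r c w₂ i = c := if_pos h₂
    exact ((idealClosure_le hw).trans_eq hc.symm).trans le_add_self
  have h : ¬ ∃ j, j ≠ i ∧ r i j ∧ 0 < w j := by
    rintro ⟨j, hji, hij, hj⟩
    rcases add_pos_iff.1 (hj.trans_le (hadd j)) with hj₁ | hj₂
    exacts [h₁ ⟨j, hji, hij, hj₁⟩, h₂ ⟨j, hji, hij, hj₂⟩]
  simpa only [idealClosure, if_neg h, if_neg h₁, if_neg h₂] using hadd i

end GeneratedIdeal

section PomsetDistance

variable {m s : ℕ} {P : PartialOrder (Fin s)} {π : Fin s → ℕ}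

lemma pomsetWt_eq_idealCard_idealClosure (u : ∀ i : Fin s, Fin (π i) → ZMod m) :
    pomsetWt m s P π u = idealCard (idealClosure P.le (m / 2) (blockWt m s π u)) := by
  unfold pomsetWt idealCard idealClosure
  -- The two sides decide the same condition by different `Decidable` instances.
  congr!

lemma idealCard_eq_zero {I : Fin s → ℕ} : idealCard I = 0 ↔ I = 0 := by
  simp only [idealCard, Finset.sum_eq_zero_iff, Finset.mem_univ, true_imp_iff, funext_iff,
    Pi.zero_apply]

variable [NeZero m]

lemma pomsetWt_eq_zero (u : ∀ i : Fin s, Fin (π i) → ZMod m) :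
    pomsetWt m s P π u = 0 ↔ u = 0 := by
  rw [pomsetWt_eq_idealCard_idealClosure, idealCard_eq_zero,
    idealClosure_eq_zero (blockWt_le_half u), blockWt_eq_zero]

lemma pomsetWt_neg (u : ∀ i : Fin s, Fin (π i) → ZMod m) :
    pomsetWt m s P π (-u) = pomsetWt m s P π u := by
  simp only [pomsetWt_eq_idealCard_idealClosure, blockWt_neg]

lemma pomsetWt_add_le (u v : ∀ i : Fin s, Fin (π i) → ZMod m) :
    pomsetWt m s P π (u + v) ≤ pomsetWt m s P π u + pomsetWt m s P π v := by
  simp only [pomsetWt_eq_idealCard_idealClosure, idealCard, ← Finset.sum_add_distrib]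
  exact Finset.sum_le_sum fun i _ =>
    idealClosure_le_add (blockWt_le_half (u + v) i) (blockWt_add_le u v)

lemma pomsetDist_eq_zero (u v : ∀ i : Fin s, Fin (π i) → ZMod m) :
    pomsetDist m s P π u v = 0 ↔ u = v := by
  rw [pomsetDist, pomsetWt_eq_zero, sub_eq_zero]

lemma pomsetDist_comm (u v : ∀ i : Fin s, Fin (π i) → ZMod m) :
    pomsetDist m s P π u v = pomsetDist m s P π v u := by
  rw [pomsetDist, pomsetDist, ← neg_sub, pomsetWt_neg]

lemma pomsetDist_triangle (u w v : ∀ i : Fin s, Fin (π i) → ZMod m) :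
    pomsetDist m s P π u v ≤ pomsetDist m s P π u w + pomsetDist m s P π w v := by
  simpa only [pomsetDist, sub_add_sub_cancel] using pomsetWt_add_le (P := P) (u - w) (w - v)

end PomsetDistance

theorem pomset_block_dist_is_metric_general
    (m s : ℕ) [NeZero m] (P : PartialOrder (Fin s)) (π : Fin s → ℕ)
    (u v w : ∀ i : Fin s, Fin (π i) → ZMod m) :
    0 ≤ pomsetDist m s P π u v ∧
    (pomsetDist m s P π u v = 0 ↔ u = v) ∧
    pomsetDist m s P π u v = pomsetDist m s P π v u ∧
    pomsetDist m s P π u v ≤ pomsetDist m s P π u w + pomsetDist m s P π w v :=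
  ⟨Nat.zero_le _, pomsetDist_eq_zero u v, pomsetDist_comm u v, pomsetDist_triangle u w v⟩

/-- the pomset block distance is a metric on `ℤ_m^n`. -/
theorem pomset_block_dist_is_metric
    (m s : ℕ) (hm : 4 ≤ m) (hs : 1 ≤ s)
    (P : PartialOrder (Fin s)) (π : Fin s → ℕ) (hπ : ∀ i, 0 < π i)
    (n : ℕ) (hn : n = ∑ i, π i)
    (u v w : ∀ i : Fin s, Fin (π i) → ZMod m) :
    0 ≤ pomsetDist m s P π u v ∧
    (pomsetDist m s P π u v = 0 ↔ u = v) ∧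
    pomsetDist m s P π u v = pomsetDist m s P π v u ∧
    pomsetDist m s P π u v ≤ pomsetDist m s P π u w + pomsetDist m s P π w v := by
  have : NeZero m := ⟨by omega⟩
  exact pomset_block_dist_is_metric_general m s P π u v w

end
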